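/- arXiv:2601.04324 — 3 statements merged into one kernel-verified Lean document; each statement's English description precedes it below -/
import Mathlib

section
/- Let n ∈ ℕ, p ∈ (1,∞), and let μ ∈ A_p on ℝⁿ. Let φ ∈ C_c^∞(B₁) satisfy 0 ≤ φ ≤ 1 and ∫_{ℝⁿ} φ(x) dx = 1, and for ε > 0 set φ_ε(x) = ε^{−n} φ(x/ε) and μ_ε = μ * φ_ε. Then for every R₀ > 0 and every ε ∈ (0,1), one has [[μ_ε]]_{BMO(B_{R₀}, μ_ε)} ≤ [[μ]]_{BMO(B_{R₀+1}, μ)}. -/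
open MeasureTheory Metric Set
open scoped ENNReal Topology

noncomputable section

abbrev En (n : ℕ) : Type := EuclideanSpace ℝ (Fin n)

/-- Lebesgue average of `f` over the ball `B_r(y)`. -/
def ballAvg (n : ℕ) (f : En n → ℝ) (y : En n) (r : ℝ) : ℝ :=
  ⨍ x in ball y r, f x

/-- Muckenhoupt `A_p` characteristic. -/
def apNorm (n : ℕ) (p : ℝ) (μ : En n → ℝ) : ℝ≥0∞ :=
  ⨆ (y : En n) (r : ℝ) (_ : 0 < r),
    ENNReal.ofReal
      ((ballAvg n μ y r) *
        (ballAvg n (fun x => μ x ^ (-(1 : ℝ) / (p - 1))) y r) ^ (p - 1))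

/-- Weighted mean oscillation `[[f]]_{BMO(Ω, μ)}`. -/
def wBMO (n : ℕ) (Ω : Set (En n)) (μ f : En n → ℝ) : ℝ≥0∞ :=
  ⨆ (y : En n) (r : ℝ) (_ : 0 < r) (_ : ball y r ⊆ Ω),
    ENNReal.ofReal
      ((∫ x in ball y r, |f x - ballAvg n f y r|) / (∫ x in ball y r, μ x))

/-- `(ω^{-n})_{B_r(y)}`, the average of `ω^{-n}` over `B_r(y)`. -/
def invAvg (n : ℕ) (ω : En n → ℝ) (y : En n) (r : ℝ) : ℝ :=
  ballAvg n (fun x => ω x ^ (-(n : ℝ))) y r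

/-- The height `r² (ω^{-n})_{B_r(y)}^{1/n}` of the weighted parabolic cylinders. -/
def cylHeight (n : ℕ) (ω : En n → ℝ) (y : En n) (r : ℝ) : ℝ :=
  r ^ 2 * invAvg n ω y r ^ ((n : ℝ)⁻¹)

/-- The weighted parabolic cylinder `C_{r,ω}(y,s)`. -/
def cylC (n : ℕ) (ω : En n → ℝ) (y : En n) (s r : ℝ) : Set (En n × ℝ) :=
  ball y r ×ˢ Ioo (s - cylHeight n ω y r) s

/-- The weighted parabolic cylinder `Q_{r,ω}(y,s)`. -/
def cylQ (n : ℕ) (ω : En n → ℝ) (y : En n) (s r : ℝ) : Set (En n × ℝ) :=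
  ball y r ×ˢ Ioo (s - cylHeight n ω y r) (s + cylHeight n ω y r)

/-- Parabolic boundary of the cylinder `B_r(y) × (a, b)`. -/
def parBdry (n : ℕ) (y : En n) (r a b : ℝ) : Set (En n × ℝ) :=
  (sphere y r ×ˢ Ioo a b) ∪ (closedBall y r ×ˢ ({a} : Set ℝ))

/-- Parabolic boundary of `C_{r,ω}(y,s)`. -/
def parBdryC (n : ℕ) (ω : En n → ℝ) (y : En n) (s r : ℝ) : Set (En n × ℝ) :=
  parBdry n y r (s - cylHeight n ω y r) s

/-- Parabolic boundary of `Q_{r,ω}(y,s)`. -/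
def parBdryQ (n : ℕ) (ω : En n → ℝ) (y : En n) (s r : ℝ) : Set (En n × ℝ) :=
  parBdry n y r (s - cylHeight n ω y r) (s + cylHeight n ω y r)

/-- Time derivative `u_t`. -/
def pderivT (n : ℕ) (u : En n × ℝ → ℝ) (p : En n × ℝ) : ℝ :=
  deriv (fun t => u (p.1, t)) p.2

/-- First spatial partial derivative `D_i u`. -/
def pderivX (n : ℕ) (u : En n × ℝ → ℝ) (i : Fin n) (p : En n × ℝ) : ℝ :=
  fderiv ℝ (fun x => u (x, p.2)) p.1 (EuclideanSpace.single i 1)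

/-- Second spatial partial derivative `D_{ij} u`. -/
def pderivXX (n : ℕ) (u : En n × ℝ → ℝ) (i j : Fin n) (p : En n × ℝ) : ℝ :=
  pderivX n (fun q => pderivX n u j q) i p

/-- Frobenius norm `|D²u|` of the spatial Hessian. -/
def hessNorm (n : ℕ) (u : En n × ℝ → ℝ) (p : En n × ℝ) : ℝ :=
  Real.sqrt (∑ i, ∑ j, (pderivXX n u i j p) ^ 2)

/-- The operator `L u = u_t − ω(x) a_{ij}(x,t) D_{ij} u`. -/
def parOp (n : ℕ) (ω : En n → ℝ) (a : Fin n → Fin n → En n × ℝ → ℝ)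
    (u : En n × ℝ → ℝ) (p : En n × ℝ) : ℝ :=
  pderivT n u p - ω p.1 * ∑ i, ∑ j, a i j p * pderivXX n u i j p

/-- Membership in the weighted Sobolev space `W^{2,1}_{n+1}(U, ω)`. -/
def MemW21 (n : ℕ) (U : Set (En n × ℝ)) (ω : En n → ℝ) (u : En n × ℝ → ℝ) : Prop :=
  LocallyIntegrableOn u U ∧
  (∀ i j : Fin n,
    IntegrableOn (fun p => |pderivXX n u i j p| ^ ((n : ℝ) + 1) * ω p.1) U) ∧
  IntegrableOn (fun p => |pderivT n u p| ^ ((n : ℝ) + 1) * (ω p.1) ^ (-(n : ℝ))) U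

/-- Symmetry, uniform ellipticity and boundedness of the coefficients `(a_{ij})`. -/
def Elliptic (n : ℕ) (ν : ℝ) (a : Fin n → Fin n → En n × ℝ → ℝ) : Prop :=
  (∀ i j p, a i j p = a j i p) ∧
  (∀ (p : En n × ℝ) (ξ : En n), ν * ‖ξ‖ ^ 2 ≤ ∑ i, ∑ j, a i j p * ξ i * ξ j) ∧
  (∀ i j p, |a i j p| ≤ ν⁻¹)

/-- Weighted measure `ω(U) = ∫_U ω(x) dx dt` of a space-time set. -/
def wMeasST (n : ℕ) (ω : En n → ℝ) (U : Set (En n × ℝ)) : ℝ :=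
  ∫ p in U, ω p.1

/-- The class `𝕃^∞_{ν,k}(K₀)` of operators with smooth truncated coefficients. -/
def SmoothClass (n k : ℕ) (ν K₀ : ℝ) (ω : En n → ℝ)
    (a : Fin n → Fin n → En n × ℝ → ℝ) : Prop :=
  ContDiff ℝ (⊤ : ℕ∞) ω ∧ (∀ i j, ContDiff ℝ (⊤ : ℕ∞) (a i j)) ∧
  (∀ x, (k : ℝ)⁻¹ ≤ ω x ∧ ω x ≤ k) ∧
  apNorm n (1 + (n : ℝ)⁻¹) ω ≤ ENNReal.ofReal K₀ ∧
  Elliptic n ν a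


/-- Mollification `μ_ε = μ * φ_ε` of a weight, with `φ_ε(y) = ε^{-n} φ(y/ε)`. -/
def mollify (n : ℕ) (φ μ : En n → ℝ) (ε : ℝ) : En n → ℝ :=
  fun x => ∫ y, (ε ^ n)⁻¹ * φ (ε⁻¹ • y) * μ (x - y)

lemma osc_fubini {X Z : Type*} [MeasurableSpace X] [MeasurableSpace Z] (ν : Measure X)
    [IsFiniteMeasure ν] (κ : Measure Z) [SFinite κ] (F : X → Z → ℝ) (M : ℝ)
    (hF : Integrable (fun q : X × Z => F q.1 q.2) (ν.prod κ))
    (hM : ∀ z, ∫ x, |F x z - ⨍ x', F x' z ∂ν| ∂ν ≤ M * ∫ x, F x z ∂ν) :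
    ∫ x, |(∫ z, F x z ∂κ) - ⨍ x', (∫ z, F x' z ∂κ) ∂ν| ∂ν ≤ M * ∫ x, (∫ z, F x z ∂κ) ∂ν := by
  have hI : Integrable (fun z => ∫ x, F x z ∂ν) κ := hF.integral_prod_right
  have hA : Integrable (fun z => ⨍ x, F x z ∂ν) κ := by
    simp only [average_eq]
    exact hI.smul (ν.real univ)⁻¹
  have hswap : ∫ x, (∫ z, F x z ∂κ) ∂ν = ∫ z, (∫ x, F x z ∂ν) ∂κ := integral_integral_swap hF
  have havg : ⨍ x', (∫ z, F x' z ∂κ) ∂ν = ∫ z, (⨍ x, F x z ∂ν) ∂κ := by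
    simp only [average_eq]
    rw [integral_smul, hswap]
  have hG : Integrable (fun q : X × Z => |F q.1 q.2 - ⨍ x', F x' q.2 ∂ν|) (ν.prod κ) :=
    (hF.sub (hA.comp_snd ν)).abs
  rw [havg]
  calc ∫ x, |(∫ z, F x z ∂κ) - ∫ z, (⨍ x', F x' z ∂ν) ∂κ| ∂ν
      ≤ ∫ x, (∫ z, |F x z - ⨍ x', F x' z ∂ν| ∂κ) ∂ν := by
        refine integral_mono_ae ?_ hG.integral_prod_left ?_
        · exact (hF.integral_prod_left.sub (integrable_const _)).abs
        · filter_upwards [hF.prod_right_ae] with x hx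
          rw [← integral_sub hx hA]
          exact abs_integral_le_integral_abs
    _ = ∫ z, (∫ x, |F x z - ⨍ x', F x' z ∂ν| ∂ν) ∂κ := integral_integral_swap hG
    _ ≤ ∫ z, M * (∫ x, F x z ∂ν) ∂κ :=
        integral_mono hG.integral_prod_right (hI.const_mul M) hM
    _ = M * ∫ x, (∫ z, F x z ∂κ) ∂ν := by rw [integral_const_mul, hswap]

lemma setInt_shift (n : ℕ) (g : En n → ℝ) (y z : En n) (r : ℝ) :
    ∫ x in ball y r, g (x - z) = ∫ x in ball (y - z) r, g x := by
  have h := (measurePreserving_sub_right (volume : Measure (En n)) z).setIntegral_preimage_emb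
    (MeasurableEquiv.subRight z).measurableEmbedding g (ball (y - z) r)
  rw [← h]
  congr 2
  ext x
  simp [dist_eq_norm]

lemma osc_le (n : ℕ) (μ : En n → ℝ) (hμ0 : ∀ x, 0 ≤ μ x) (hμloc : LocallyIntegrable μ)
    (Ω : Set (En n)) (hfin : wBMO n Ω μ μ ≠ ⊤) (y : En n) (r : ℝ) (hr : 0 < r)
    (hsub : ball y r ⊆ Ω) :
    ∫ x in ball y r, |μ x - ballAvg n μ y r| ≤ (wBMO n Ω μ μ).toReal * ∫ x in ball y r, μ x := by
  have hint : IntegrableOn μ (ball y r) :=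
    (hμloc.integrableOn_isCompact (isCompact_closedBall y r)).mono_set ball_subset_closedBall
  have hb : 0 ≤ ∫ x in ball y r, μ x := integral_nonneg hμ0
  rcases hb.eq_or_lt with h0 | hpos
  · have hae := (integral_eq_zero_iff_of_nonneg hμ0 hint).1 h0.symm
    have havg : ballAvg n μ y r = 0 := by
      unfold ballAvg
      rw [average_eq, ← h0, smul_zero]
    rw [havg, ← h0, mul_zero]
    refine le_of_eq (integral_eq_zero_of_ae ?_)
    filter_upwards [hae] with x hx
    simp only [Pi.zero_apply] at hx
    simp [hx]
  · rw [← div_le_iff₀ hpos]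
    refine (ENNReal.ofReal_le_iff_le_toReal hfin).1 ?_
    unfold wBMO
    exact le_iSup_of_le y (le_iSup_of_le r (le_iSup_of_le hr (le_iSup_of_le hsub le_rfl)))

theorem statement12
    (n : ℕ) (hn : 0 < n) (p : ℝ) (hp : 1 < p) (μ φ : En n → ℝ)
    (hμ0 : ∀ x, 0 ≤ μ x) (hμloc : LocallyIntegrable μ)
    (hμAp : apNorm n p μ < ⊤)
    (hφsm : ContDiff ℝ (⊤ : ℕ∞) φ) (hφsupp : HasCompactSupport φ)
    (hφball : tsupport φ ⊆ ball (0 : En n) 1)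
    (hφ0 : ∀ x, 0 ≤ φ x) (hφ1 : ∀ x, φ x ≤ 1)
    (hφint : ∫ x, φ x = 1) :
    ∀ R₀ : ℝ, 0 < R₀ → ∀ ε : ℝ, 0 < ε → ε < 1 →
      wBMO n (ball (0 : En n) R₀) (mollify n φ μ ε) (mollify n φ μ ε) ≤
        wBMO n (ball (0 : En n) (R₀ + 1)) μ μ := by
  intro R₀ hR ε hε hε1
  by_cases hfin : wBMO n (ball (0 : En n) (R₀ + 1)) μ μ = ⊤
  · rw [hfin]; exact le_top
  set M := (wBMO n (ball (0 : En n) (R₀ + 1)) μ μ).toReal with hMdef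
  have hM0 : 0 ≤ M := ENNReal.toReal_nonneg
  conv_lhs => unfold wBMO
  refine iSup_le fun y => iSup_le fun r => iSup_le fun hr => iSup_le fun hsub => ?_
  refine (ENNReal.ofReal_le_iff_le_toReal hfin).2 ?_
  set k : En n → ℝ := fun z => (ε ^ n)⁻¹ * φ (ε⁻¹ • z) with hk
  have hk0 : ∀ z, 0 ≤ k z := fun z => mul_nonneg (by positivity) (hφ0 _)
  have hksupp : ∀ z, k z ≠ 0 → ‖z‖ < 1 := by
    intro z hz
    have h1 : φ (ε⁻¹ • z) ≠ 0 := fun h => hz (by simp [hk, h])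
    have h2 := hφball (subset_tsupport φ h1)
    rw [mem_ball_zero_iff, norm_smul, norm_inv, Real.norm_eq_abs, abs_of_pos hε,
      inv_mul_lt_iff₀ hε] at h2
    linarith
  have hkint : Integrable k := by
    have h1 : Integrable φ := hφsm.continuous.integrable_of_hasCompactSupport hφsupp
    exact (h1.comp_smul (inv_ne_zero hε.ne')).const_mul _
  have hmol0 : ∀ x, 0 ≤ mollify n φ μ ε x := fun x =>
    integral_nonneg fun z => mul_nonneg (hk0 z) (hμ0 _)
  refine div_le_of_le_mul₀ (integral_nonneg hmol0) hM0 ?_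
  have hF : Integrable (fun q : En n × En n => k q.2 * μ (q.1 - q.2))
      ((volume.restrict (ball y r)).prod volume) := by
    have hμ' : Integrable ((ball y (r + 1)).indicator μ) :=
      ((hμloc.integrableOn_isCompact (isCompact_closedBall y (r + 1))).mono_set
        ball_subset_closedBall).integrable_indicator measurableSet_ball
    have h1 := hkint.convolution_integrand (ContinuousLinearMap.mul ℝ ℝ) hμ'
    have h2 : Integrable (fun q : En n × En n =>
        k q.2 * (ball y (r + 1)).indicator μ (q.1 - q.2))
        ((volume.restrict (ball y r)).prod volume) := by
      have h3 := h1.mono_measure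
        (Measure.restrict_le_self (s := ball y r ×ˢ (univ : Set (En n))))
      rw [← Measure.prod_restrict, Measure.restrict_univ] at h3
      exact h3
    refine h2.congr ?_
    have hae : ∀ᵐ q ∂((volume.restrict (ball y r)).prod (volume : Measure (En n))),
        q.1 ∈ ball y r :=
      Measure.quasiMeasurePreserving_fst.ae (ae_restrict_mem measurableSet_ball)
    filter_upwards [hae] with q hq
    by_cases hz : k q.2 = 0
    · simp [hz]
    · have h4 := hksupp _ hz
      rw [indicator_of_mem]
      rw [mem_ball, dist_eq_norm] at hq ⊢
      calc ‖q.1 - q.2 - y‖ = ‖(q.1 - y) - q.2‖ := by congr 1; abel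
        _ ≤ ‖q.1 - y‖ + ‖q.2‖ := norm_sub_le _ _
        _ < r + 1 := by linarith
  have : IsFiniteMeasure ((volume : Measure (En n)).restrict (ball y r)) :=
    ⟨by rw [Measure.restrict_apply_univ]; exact measure_ball_lt_top⟩
  refine osc_fubini (volume.restrict (ball y r)) volume (fun x z => k z * μ (x - z)) M hF ?_
  intro z
  by_cases hz : k z = 0
  · simp [hz, average_eq]
  have hz1 := hksupp z hz
  have hsub' : ball (y - z) r ⊆ ball (0 : En n) (R₀ + 1) := by
    intro x hx
    have h5 : x + z ∈ ball (0 : En n) R₀ := hsub (by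
      rw [mem_ball, dist_eq_norm] at hx ⊢
      convert hx using 2; abel)
    rw [mem_ball_zero_iff] at h5 ⊢
    calc ‖x‖ = ‖(x + z) - z‖ := by congr 1; abel
      _ ≤ ‖x + z‖ + ‖z‖ := norm_sub_le _ _
      _ < R₀ + 1 := by linarith
  have hosc := osc_le n μ hμ0 hμloc _ hfin (y - z) r hr hsub'
  have havg : ⨍ x' in ball y r, k z * μ (x' - z) = k z * ballAvg n μ (y - z) r := by
    unfold ballAvg
    rw [average_eq, average_eq, integral_const_mul, setInt_shift]
    have : (volume : Measure (En n)) (ball y r) = volume (ball (y - z) r) := by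
      rw [Measure.addHaar_ball_center, Measure.addHaar_ball_center volume (y - z)]
    simp only [measureReal_def, Measure.restrict_apply_univ, this, smul_eq_mul]
    ring
  rw [havg]
  have h6 : ∀ x, |k z * μ (x - z) - k z * ballAvg n μ (y - z) r|
      = k z * |μ (x - z) - ballAvg n μ (y - z) r| := fun x => by
    rw [← mul_sub, abs_mul, abs_of_nonneg (hk0 z)]
  simp only [h6]
  rw [integral_const_mul, integral_const_mul, setInt_shift,
    setInt_shift n (fun x => |μ x - ballAvg n μ (y - z) r|)]
  calc _ ≤ k z * (M * ∫ x in ball (y - z) r, μ x) := mul_le_mul_of_nonneg_left hosc (hk0 z)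
    _ = _ := by ring

end
end

section
/- Let n ∈ ℕ and K₀ ≥ 1. There exists a constant N = N(n,K₀) > 0 such that for every μ ∈ A₂ on ℝⁿ with [μ]_{A₂} ≤ K₀, the reciprocal weight β(x) = μ(x)^{−1} satisfies [[β]]_{BMO(B_{R₀}, β)} ≤ N [[μ]]_{BMO(B_{R₀}, μ)} for every R₀ > 0. -/
open MeasureTheory Metric Set
open scoped ENNReal Topology

noncomputable section

/-- Volume of the unit ball. -/
def vb (n : ℕ) : ℝ := volume.real (ball (0 : En n) 1)

lemma vb_pos (n : ℕ) : 0 < vb n := by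
  unfold vb
  exact ENNReal.toReal_pos (measure_ball_pos _ _ one_pos).ne' measure_ball_lt_top.ne

lemma vol_ball (n : ℕ) (hn : 0 < n) (x : En n) {r : ℝ} (hr : 0 ≤ r) :
    volume (ball x r) = ENNReal.ofReal (r ^ n * vb n) := by
  have : Nonempty (Fin n) := ⟨⟨0, hn⟩⟩
  rw [Measure.addHaar_ball volume x hr, ENNReal.ofReal_mul (by positivity), vb, Measure.real,
    ENNReal.ofReal_toReal measure_ball_lt_top.ne]
  simp

lemma vol_closedBall (n : ℕ) (x : En n) {r : ℝ} (hr : 0 ≤ r) :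
    volume (closedBall x r) = ENNReal.ofReal (r ^ n * vb n) := by
  rw [Measure.addHaar_closedBall volume x hr, ENNReal.ofReal_mul (by positivity), vb, Measure.real,
    ENNReal.ofReal_toReal measure_ball_lt_top.ne]
  simp

lemma volr_ball (n : ℕ) (hn : 0 < n) (x : En n) {r : ℝ} (hr : 0 ≤ r) :
    volume.real (ball x r) = r ^ n * vb n := by
  rw [Measure.real, vol_ball n hn x hr, ENNReal.toReal_ofReal]
  have := vb_pos n
  positivity

lemma int_ball (n : ℕ) (hn : 0 < n) (f : En n → ℝ) (x : En n) {r : ℝ} (hr : 0 < r) :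
    ∫ z in ball x r, f z = ballAvg n f x r * (r ^ n * vb n) := by
  have := vb_pos n
  rw [ballAvg, setAverage_eq, volr_ball n hn x hr.le, smul_eq_mul]
  field_simp

lemma closedBall_ae_ball (n : ℕ) (hn : 0 < n) (x : En n) (r : ℝ) :
    (closedBall x r : Set (En n)) =ᵐ[volume] ball x r := by
  have : Nonempty (Fin n) := ⟨⟨0, hn⟩⟩
  refine (ae_eq_of_subset_of_measure_ge ball_subset_closedBall ?_ ?_ ?_).symm
  · exact (Measure.addHaar_closedBall_eq_addHaar_ball volume x r).le
  · exact measurableSet_ball.nullMeasurableSet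
  · exact measure_closedBall_lt_top.ne

structure OscHyp (n : ℕ) (Ω : Set (En n)) (μ : En n → ℝ) (δ : ℝ) : Prop where
  hn : 0 < n
  nonneg : ∀ x, 0 ≤ μ x
  loc : LocallyIntegrable μ
  dpos : 0 ≤ δ
  osc : ∀ y r, 0 < r → ball y r ⊆ Ω →
    ∫ x in ball y r, |μ x - ballAvg n μ y r| ≤ δ * (ballAvg n μ y r * (r ^ n * vb n))

lemma ballAvg_nonneg (n : ℕ) (μ : En n → ℝ) (h : ∀ x, 0 ≤ μ x) (y : En n) (r : ℝ) :
    0 ≤ ballAvg n μ y r := by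
  rw [ballAvg, setAverage_eq, smul_eq_mul]
  exact mul_nonneg (inv_nonneg.2 measureReal_nonneg) (integral_nonneg h)

lemma intOn_ball {n : ℕ} {μ : En n → ℝ} (h : LocallyIntegrable μ) (y : En n) (r : ℝ) :
    IntegrableOn μ (ball y r) :=
  (h.integrableOn_isCompact (isCompact_closedBall y r)).mono_set ball_subset_closedBall

lemma intOn_abs {n : ℕ} {μ : En n → ℝ} (h : LocallyIntegrable μ) (y : En n) (r c : ℝ) :
    IntegrableOn (fun x => |μ x - c|) (ball y r) :=
  ((intOn_ball h y r).sub (integrableOn_const measure_ball_lt_top.ne)).abs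

/-- a deficit of mean costs oscillation -/
lemma deficit {n : ℕ} (hn : 0 < n) {μ : En n → ℝ} (h : LocallyIntegrable μ) (x : En n) {r : ℝ}
    (hr : 0 < r) (m : ℝ) :
    (m - ballAvg n μ x r) * (r ^ n * vb n) ≤ ∫ z in ball x r, |μ z - m| := by
  have h1 : ∫ z in ball x r, (m - μ z) = (m - ballAvg n μ x r) * (r ^ n * vb n) := by
    rw [integral_sub (integrableOn_const (C := m) (s := ball x r) measure_ball_lt_top.ne)
      (intOn_ball h x r),
      int_ball n hn μ x hr, setIntegral_const, volr_ball n hn x hr.le, smul_eq_mul]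
    ring
  rw [← h1]
  refine integral_mono ((integrableOn_const (C := m) (s := ball x r) measure_ball_lt_top.ne).sub (intOn_ball h x r))
    (intOn_abs h x r m) fun z => ?_
  dsimp only
  rw [abs_sub_comm]
  exact le_abs_self _

lemma mean_drop {n : ℕ} {Ω : Set (En n)} {μ : En n → ℝ} {δ : ℝ} (H : OscHyp n Ω μ δ)
    {x y : En n} {r r' : ℝ} (hr' : 0 < r') (hrr : r ≤ 2 * r') (hsub : ball x r' ⊆ ball y r)
    (hΩ : ball y r ⊆ Ω) (hr : 0 < r) :
    (1 - 2 ^ n * δ) * ballAvg n μ y r ≤ ballAvg n μ x r' := by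
  set m := ballAvg n μ y r with hm
  have h1 := deficit H.hn H.loc x hr' m
  have h2 : ∫ z in ball x r', |μ z - m| ≤ ∫ z in ball y r, |μ z - m| :=
    setIntegral_mono_set (intOn_abs H.loc y r m) (ae_of_all _ fun z => abs_nonneg _)
      (LE.le.eventuallyLE hsub)
  have h3 := H.osc y r hr hΩ
  have hm0 : 0 ≤ m := ballAvg_nonneg n μ H.nonneg y r
  have h4 : r ^ n ≤ 2 ^ n * r' ^ n := by
    rw [← mul_pow]; exact pow_le_pow_left₀ hr.le hrr n
  have hv := vb_pos n
  have hp : 0 < r' ^ n * vb n := by positivity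
  have h5 : δ * (m * (r ^ n * vb n)) ≤ (2 ^ n * δ * m) * (r' ^ n * vb n) := by
    have := mul_le_mul_of_nonneg_left h4 (mul_nonneg (mul_nonneg H.dpos hm0) hv.le)
    nlinarith
  have h6 : (m - ballAvg n μ x r') * (r' ^ n * vb n) ≤ (2 ^ n * δ * m) * (r' ^ n * vb n) := by
    linarith
  have := le_of_mul_le_mul_right h6 hp
  linarith

lemma chain {n : ℕ} {Ω : Set (En n)} {μ : En n → ℝ} {δ : ℝ} (H : OscHyp n Ω μ δ)
    (hq : 0 ≤ 1 - 2 ^ n * δ) (k : ℕ) : ∀ (x y : En n) (r r' : ℝ), 0 < r' → 0 < r →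
    r ≤ 2 ^ k * r' → dist x y ≤ r - r' → ball y r ⊆ Ω →
    (1 - 2 ^ n * δ) ^ k * ballAvg n μ y r ≤ ballAvg n μ x r' := by
  induction k with
  | zero =>
    intro x y r r' hr' hr h1 h2 hΩ
    have h3 : r = r' := by
      have := dist_nonneg (x := x) (y := y)
      simp at h1; linarith
    subst h3
    have : x = y := by
      apply dist_le_zero.1; linarith
    simp [this]
  | succ k ih =>
    intro x y r r' hr' hr h1 h2 hΩ
    have hm0 := ballAvg_nonneg n μ H.nonneg y r
    rcases le_total r (2 * r') with h | h
    · have := mean_drop H hr' h (ball_subset_ball' (by linarith)) hΩ hr (x := x)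
      refine le_trans ?_ this
      refine mul_le_mul_of_nonneg_right ?_ hm0
      rw [pow_succ]
      have h0 : 0 ≤ 2 ^ n * δ := mul_nonneg (by positivity) H.dpos
      exact mul_le_of_le_one_left hq (pow_le_one₀ hq (by linarith))
    · set s := (r / 2) / (r - r') with hs
      have hd : 0 < r - r' := by linarith
      have hs0 : 0 ≤ s := by positivity
      have hs1 : s ≤ 1 := by rw [hs, div_le_one hd]; linarith
      have hsd : s * (r - r') = r / 2 := by rw [hs]; field_simp
      set z := AffineMap.lineMap y x s with hz
      have e1 : dist z y ≤ r / 2 := by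
        rw [hz, dist_lineMap_left, Real.norm_of_nonneg hs0, ← hsd, dist_comm]
        exact mul_le_mul_of_nonneg_left h2 hs0
      have e2 : dist x z ≤ r / 2 - r' := by
        rw [dist_comm, hz, dist_lineMap_right, Real.norm_of_nonneg (by linarith), dist_comm]
        have := mul_le_mul_of_nonneg_left h2 (sub_nonneg.2 hs1)
        nlinarith
      have hsub : ball z (r / 2) ⊆ ball y r := ball_subset_ball' (by linarith)
      have a1 := mean_drop H (x := z) (r' := r / 2) (by linarith) (by linarith) hsub hΩ hr
      have a2 := ih x z (r / 2) r' hr' (by linarith) (by rw [pow_succ] at h1; linarith) e2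
        (hsub.trans hΩ)
      refine le_trans ?_ a2
      rw [pow_succ, mul_assoc]
      exact mul_le_mul_of_nonneg_left a1 (pow_nonneg hq k)

lemma covering (n : ℕ) : ∃ N : ℕ, 1 ≤ N ∧ ∀ (ν κ : Measure (En n)) (S T : Set (En n))
    (ρ : En n → ℝ) (R : ℝ), (∀ x ∈ S, 0 < ρ x ∧ ρ x ≤ R ∧ closedBall x (ρ x) ⊆ T ∧
      ν (closedBall x (ρ x)) ≤ κ (closedBall x (ρ x))) → ν S ≤ N * κ T := by
  obtain ⟨N, τ, hτ, hN⟩ := HasBesicovitchCovering.no_satelliteConfig (α := En n)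
  refine ⟨N + 1, by omega, fun ν κ S T ρ R h => ?_⟩
  let q : Besicovitch.BallPackage S (En n) :=
    { c := fun x => x, r := fun x => ρ x, rpos := fun x => (h x x.2).1, r_bound := R,
      r_le := fun x => (h x x.2).2.1 }
  obtain ⟨s, hs, hc⟩ := Besicovitch.exist_disjoint_covering_families hτ hN q
  have hcount : ∀ i, (s i).Countable := fun i =>
    (hs i).countable_of_nonempty_interior (fun j _ => by
      have : (ball (q.c j) (q.r j)).Nonempty := nonempty_ball.2 (q.rpos j)
      exact this.mono ball_subset_interior_closedBall)
  have h1 : S ⊆ ⋃ i, ⋃ j ∈ s i, closedBall (q.c j) (q.r j) := by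
    intro x hx
    have : x ∈ range q.c := ⟨⟨x, hx⟩, rfl⟩
    have := hc this
    simp only [mem_iUnion] at this ⊢
    obtain ⟨i, j, hj, hxj⟩ := this
    exact ⟨i, j, hj, ball_subset_closedBall hxj⟩
  have h2 : ∀ i, ν (⋃ j ∈ s i, closedBall (q.c j) (q.r j)) ≤ κ T := by
    intro i
    calc ν (⋃ j ∈ s i, closedBall (q.c j) (q.r j))
        ≤ ∑' j : s i, ν (closedBall (q.c j) (q.r j)) := measure_biUnion_le _ (hcount i) _
      _ ≤ ∑' j : s i, κ (closedBall (q.c j) (q.r j)) :=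
          ENNReal.tsum_le_tsum fun j => (h j.1 j.1.2).2.2.2
      _ = κ (⋃ j ∈ s i, closedBall (q.c j) (q.r j)) :=
          (measure_biUnion (hcount i) (hs i) fun j _ => measurableSet_closedBall).symm
      _ ≤ κ T := measure_mono (iUnion₂_subset fun j _ => (h j j.2).2.2.1)
  calc ν S ≤ ν (⋃ i, ⋃ j ∈ s i, closedBall (q.c j) (q.r j)) := measure_mono h1
    _ ≤ ∑ i, ν (⋃ j ∈ s i, closedBall (q.c j) (q.r j)) := measure_iUnion_fintype_le _ _
    _ ≤ ∑ i : Fin N, κ T := Finset.sum_le_sum fun i _ => h2 i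
    _ = N * κ T := by simp
    _ ≤ (N + 1 : ℕ) * κ T := by gcongr; simp

def CovProp (n N : ℕ) : Prop := 1 ≤ N ∧ ∀ (ν κ : Measure (En n)) (S T : Set (En n))
    (ρ : En n → ℝ) (R : ℝ), (∀ x ∈ S, 0 < ρ x ∧ ρ x ≤ R ∧ closedBall x (ρ x) ⊆ T ∧
      ν (closedBall x (ρ x)) ≤ κ (closedBall x (ρ x))) → ν S ≤ N * κ T

lemma lint_osc {n : ℕ} {μ : En n → ℝ} (h : LocallyIntegrable μ) (y : En n) (r m a : ℝ)
    (ha : 0 ≤ a) : ∫⁻ z in ball y r, ENNReal.ofReal (a * |μ z - m|) =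
      ENNReal.ofReal (a * ∫ z in ball y r, |μ z - m|) := by
  rw [← integral_const_mul, ofReal_integral_eq_lintegral_ofReal]
  · exact (intOn_abs h y r m).const_mul a
  · exact ae_of_all _ fun z => mul_nonneg ha (abs_nonneg _)

lemma good_radius {n : ℕ} {Ω : Set (En n)} {μ : En n → ℝ} {δ : ℝ} (H : OscHyp n Ω μ δ)
    (hδ : 2 ^ n * δ ≤ 1 / 2) {x x0 : En n} {ρ : ℝ} (hρ : 0 < ρ) (hΩ : ball x0 (2 * ρ) ⊆ Ω)
    (hx : x ∈ closedBall x0 ρ)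
    (hL : Filter.Tendsto (fun j : ℕ => ⨍ y in closedBall x (ρ * (1 / 2) ^ j), μ y)
      Filter.atTop (𝓝 (μ x)))
    (hμ : μ x < ballAvg n μ x0 (2 * ρ) / 2) :
    ∃ ρ', 0 < ρ' ∧ 2 * ρ' ≤ ρ ∧ ballAvg n μ x ρ' < ballAvg n μ x0 (2 * ρ) / 2 ∧
      ballAvg n μ x0 (2 * ρ) / 2 ≤ ballAvg n μ x (2 * ρ') := by
  classical
  have hex : ∃ j : ℕ, ballAvg n μ x (ρ * (1 / 2) ^ j) < ballAvg n μ x0 (2 * ρ) / 2 := by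
    obtain ⟨j, hj⟩ := (hL.eventually_lt_const hμ).exists
    refine ⟨j, ?_⟩
    rwa [setAverage_congr (closedBall_ae_ball n H.hn x _)] at hj
  have hm0 := ballAvg_nonneg n μ H.nonneg x0 (2 * ρ)
  have h0 : ballAvg n μ x0 (2 * ρ) / 2 ≤ ballAvg n μ x ρ := by
    have := mean_drop H hρ le_rfl (x := x) (y := x0)
      (ball_subset_ball' (by have := mem_closedBall.1 hx; linarith)) hΩ (by linarith)
    nlinarith
  obtain ⟨j, hj, hjm⟩ : ∃ j : ℕ, ballAvg n μ x (ρ * (1 / 2) ^ j) < ballAvg n μ x0 (2 * ρ) / 2 ∧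
      ∀ i < j, ¬ ballAvg n μ x (ρ * (1 / 2) ^ i) < ballAvg n μ x0 (2 * ρ) / 2 :=
    ⟨Nat.find hex, Nat.find_spec hex, fun i hi => Nat.find_min hex hi⟩
  cases j with
  | zero => simp at hj; linarith
  | succ j =>
    refine ⟨ρ * (1 / 2) ^ (j + 1), by positivity, ?_, hj, ?_⟩
    · have : (1 / 2 : ℝ) ^ j ≤ 1 := pow_le_one₀ (by norm_num) (by norm_num)
      rw [pow_succ]; nlinarith
    · have := hjm j (by omega)
      have e : 2 * (ρ * (1 / 2) ^ (j + 1)) = ρ * (1 / 2) ^ j := by rw [pow_succ]; ring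
      rw [e]; exact not_lt.1 this

lemma decay {n N : ℕ} (hN : CovProp n N) {Ω : Set (En n)} {μ : En n → ℝ} {δ : ℝ}
    (H : OscHyp n Ω μ δ) (hδ : 2 ^ n * δ ≤ 1 / 2) (k : ℕ) : ∀ (x0 : En n) (ρ : ℝ), 0 < ρ →
    ball x0 (2 * ρ) ⊆ Ω →
    volume ({x | μ x < ballAvg n μ x0 (2 * ρ) / 2 ^ k} ∩ closedBall x0 ρ) ≤
      ENNReal.ofReal ((N * 2 ^ (n + 1) * δ) ^ k * (ρ ^ n * vb n)) := by
  induction k with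
  | zero =>
    intro x0 ρ hρ hΩ
    rw [pow_zero (_ * _), one_mul, ← vol_closedBall n x0 hρ.le]
    exact measure_mono inter_subset_right
  | succ k ih =>
    intro x0 ρ hρ hΩ
    have hv := vb_pos n
    have hd := H.dpos
    set m := ballAvg n μ x0 (2 * ρ) with hm
    have hm0 : 0 ≤ m := ballAvg_nonneg n μ H.nonneg x0 (2 * ρ)
    rcases hm0.eq_or_lt with h0 | hmp
    · have : ({x | μ x < m / 2 ^ (k + 1)} ∩ closedBall x0 ρ) = ∅ := by
        ext x
        simp only [← h0, zero_div, mem_inter_iff, mem_ofPred_eq, mem_empty_iff_false, iff_false]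
        exact fun h => absurd h.1 (not_lt.2 (H.nonneg x))
      rw [this]; simp
    set D : ℝ := N * 2 ^ (n + 1) * δ with hD
    set E := ({x | μ x < m / 2 ^ (k + 1)} ∩ closedBall x0 ρ) with hE
    have hleb := IsUnifLocDoublingMeasure.ae_tendsto_average (volume : Measure (En n)) H.loc 1
    set P : Set (En n) := {x | Filter.Tendsto
      (fun j : ℕ => ⨍ y in closedBall x (ρ * (1 / 2) ^ j), μ y) Filter.atTop (𝓝 (μ x))} with hP
    have hPae : ∀ᵐ x, x ∈ P := by
      filter_upwards [hleb] with x hx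
      refine hx (fun _ : ℕ => x) (fun j : ℕ => ρ * (1 / 2) ^ j) ?_ ?_
      · refine tendsto_nhdsWithin_iff.2 ⟨?_, Filter.Eventually.of_forall fun j => ?_⟩
        · have := (tendsto_pow_atTop_nhds_zero_of_lt_one (r := (1 / 2 : ℝ)) (by norm_num)
            (by norm_num)).const_mul ρ
          simpa using this
        · exact mem_Ioi.2 (by positivity)
      · refine Filter.Eventually.of_forall fun j => mem_closedBall_self ?_
        positivity
    have key : ∀ x ∈ E ∩ P, ∃ ρ', 0 < ρ' ∧ 2 * ρ' ≤ ρ ∧ ballAvg n μ x ρ' < m / 2 ∧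
        m / 2 ≤ ballAvg n μ x (2 * ρ') := by
      rintro x ⟨⟨hx1, hx2⟩, hx3⟩
      refine good_radius H hδ hρ hΩ hx2 hx3 (lt_of_lt_of_le hx1 ?_)
      refine div_le_div_of_nonneg_left hm0 (by norm_num) ?_
      rw [pow_succ]
      have : (1 : ℝ) ≤ 2 ^ k := one_le_pow₀ (by norm_num)
      linarith
    choose! f hf1 hf2 hf3 hf4 using key
    have hcov := hN.2 (volume.restrict E)
      (ENNReal.ofReal (D ^ k) •
        volume.withDensity (fun z => ENNReal.ofReal (2 / m * |μ z - m|)))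
      (E ∩ P) (ball x0 (2 * ρ)) f ρ ?_
    · have e1 : volume E ≤ volume.restrict E (E ∩ P) := by
        refine le_trans ?_ (Measure.le_restrict_apply _ _)
        refine measure_mono_ae ?_
        filter_upwards [hPae] with x hx hxE
        exact ⟨⟨hxE, hx⟩, hxE⟩
      refine e1.trans (hcov.trans ?_)
      rw [Measure.smul_apply, withDensity_apply _ measurableSet_ball,
        lint_osc H.loc _ _ _ _ (by positivity), smul_eq_mul, ← ENNReal.ofReal_mul (by positivity),
        ← ENNReal.ofReal_natCast, ← ENNReal.ofReal_mul (by positivity)]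
      apply ENNReal.ofReal_le_ofReal
      have h3 := H.osc x0 (2 * ρ) (by linarith) hΩ
      have h4 : 2 / m * ∫ x in ball x0 (2 * ρ), |μ x - m| ≤ 2 * δ * ((2 * ρ) ^ n * vb n) := by
        rw [div_mul_eq_mul_div, div_le_iff₀ hmp]
        linarith
      calc (N : ℝ) * (D ^ k * (2 / m * ∫ x in ball x0 (2 * ρ), |μ x - m|))
          ≤ N * (D ^ k * (2 * δ * ((2 * ρ) ^ n * vb n))) := by gcongr
        _ = D ^ (k + 1) * (ρ ^ n * vb n) := by
          rw [pow_succ D k, hD, mul_pow, pow_succ 2 n]; ring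
    · intro x hx
      have p1 := hf1 x hx
      have p2 := hf2 x hx
      have p3 := hf3 x hx
      have p4 := hf4 x hx
      have hxd := mem_closedBall.1 hx.1.2
      have hsub : closedBall x (f x) ⊆ ball x0 (2 * ρ) :=
        closedBall_subset_ball' (by linarith)
      have hsub2 : ball x (2 * f x) ⊆ Ω := (ball_subset_ball' (by linarith)).trans hΩ
      refine ⟨p1, by linarith, hsub, ?_⟩
      rw [Measure.restrict_apply measurableSet_closedBall, Measure.smul_apply,
        withDensity_apply _ measurableSet_closedBall,
        setLIntegral_congr (closedBall_ae_ball n H.hn x _),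
        lint_osc H.loc _ _ _ _ (by positivity), smul_eq_mul, ← ENNReal.ofReal_mul (by positivity)]
      have i1 := ih x (f x) p1 hsub2
      refine le_trans (measure_mono ?_) (i1.trans (ENNReal.ofReal_le_ofReal ?_))
      · rintro z ⟨hz1, hz2⟩
        refine ⟨?_, hz1⟩
        rw [mem_ofPred_eq]
        refine lt_of_lt_of_le hz2.1 ?_
        rw [pow_succ, div_le_div_iff₀ (by positivity) (by positivity)]
        have : (0 : ℝ) < 2 ^ k := by positivity
        nlinarith
      · refine mul_le_mul_of_nonneg_left ?_ (by positivity)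
        have d1 := deficit H.hn H.loc x p1 m
        have hp : 0 < f x ^ n * vb n := by positivity
        rw [div_mul_eq_mul_div, le_div_iff₀ hmp]
        nlinarith

lemma interior1 {n N : ℕ} (hN : CovProp n N) {Ω : Set (En n)} {μ : En n → ℝ} {δ : ℝ}
    (H : OscHyp n Ω μ δ) (hδ : N * 2 ^ (n + 1) * δ ≤ 1 / 4) (hδ' : 2 ^ n * δ ≤ 1 / 4)
    (x0 : En n) {ρ : ℝ} (hρ : 0 < ρ) (hΩ : ball x0 (2 * ρ) ⊆ Ω) :
    ∫⁻ z in closedBall x0 ρ,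
      ENNReal.ofReal (max (ballAvg n μ x0 (2 * ρ) - μ z) 0 * (μ z)⁻¹) ≤
      ENNReal.ofReal (9 * (N * 2 ^ (n + 1)) * δ * (ρ ^ n * vb n)) := by
  have hv := vb_pos n
  have hd := H.dpos
  have hN1 : (1 : ℝ) ≤ N := by exact_mod_cast hN.1
  set m := ballAvg n μ x0 (2 * ρ) with hm
  have hm0 : 0 ≤ m := ballAvg_nonneg n μ H.nonneg x0 (2 * ρ)
  rcases hm0.eq_or_lt with h0 | hmp
  · rw [← h0]
    have : ∀ z, ENNReal.ofReal (max (0 - μ z) 0 * (μ z)⁻¹) = 0 := fun z => by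
      rw [max_eq_right (by linarith [H.nonneg z])]; simp
    simp only [this, lintegral_zero, zero_le]
  set D : ℝ := N * 2 ^ (n + 1) * δ with hD
  have hD0 : 0 ≤ D := by positivity
  set V := ρ ^ n * vb n with hV
  have hV0 : 0 < V := by positivity
  have hmeas : AEMeasurable μ (volume.restrict (closedBall x0 ρ)) :=
    H.loc.aestronglyMeasurable.aemeasurable.restrict
  set F : ℕ → Set (En n) := fun k => {x | μ x < m / 2 ^ (k + 1)} with hF
  have hFm : ∀ k, NullMeasurableSet (F k) (volume.restrict (closedBall x0 ρ)) := fun k =>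
    nullMeasurableSet_lt hmeas aemeasurable_const
  have pw : ∀ z, ENNReal.ofReal (max (m - μ z) 0 * (μ z)⁻¹) ≤
      ENNReal.ofReal (2 / m * |μ z - m|) +
        ∑' k, (F k).indicator (fun _ => ENNReal.ofReal (2 ^ (k + 2))) z := by
    intro z
    rcases (H.nonneg z).eq_or_lt with hz | hz
    · simp [← hz]
    rcases le_or_gt (m / 2) (μ z) with h2 | h2
    · refine le_trans (ENNReal.ofReal_le_ofReal ?_) le_self_add
      rw [mul_comm (2 / m)]
      refine mul_le_mul ?_ ?_ (by positivity) (abs_nonneg _)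
      · rw [abs_sub_comm]; exact max_le (le_abs_self _) (abs_nonneg _)
      · rw [inv_le_comm₀ hz (by positivity), inv_div]; exact h2
    · classical
      have hex : ∃ j : ℕ, m / 2 ^ (j + 1) ≤ μ z := by
        obtain ⟨j, hj⟩ := pow_unbounded_of_one_lt (m / μ z) (one_lt_two (α := ℝ))
        refine ⟨j, ?_⟩
        rw [div_lt_iff₀ hz] at hj
        rw [div_le_iff₀ (by positivity), pow_succ]
        nlinarith
      obtain ⟨j, hj, hjm⟩ : ∃ j : ℕ, m / 2 ^ (j + 1) ≤ μ z ∧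
          ∀ i < j, ¬ m / 2 ^ (i + 1) ≤ μ z :=
        ⟨Nat.find hex, Nat.find_spec hex, fun i hi => Nat.find_min hex hi⟩
      cases j with
      | zero => simp at hj; linarith
      | succ k =>
        refine le_trans ?_ le_add_self
        refine le_trans ?_ (ENNReal.le_tsum k)
        have hzF : z ∈ F k := not_le.1 (hjm k (by omega))
        rw [indicator_of_mem hzF]
        apply ENNReal.ofReal_le_ofReal
        rw [max_eq_left (by linarith), ← div_eq_mul_inv, div_le_iff₀ hz]
        rw [div_le_iff₀ (by positivity)] at hj
        linarith
  calc ∫⁻ z in closedBall x0 ρ, ENNReal.ofReal (max (m - μ z) 0 * (μ z)⁻¹)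
      ≤ ∫⁻ z in closedBall x0 ρ, (ENNReal.ofReal (2 / m * |μ z - m|) +
        ∑' k, (F k).indicator (fun _ => ENNReal.ofReal (2 ^ (k + 2))) z) := lintegral_mono pw
    _ = (∫⁻ z in closedBall x0 ρ, ENNReal.ofReal (2 / m * |μ z - m|)) +
        ∑' k, ∫⁻ z in closedBall x0 ρ,
          (F k).indicator (fun _ => ENNReal.ofReal (2 ^ (k + 2))) z := by
        rw [lintegral_add_left', lintegral_tsum]
        · exact fun k => aemeasurable_const.indicator₀ (hFm k)
        · exact (((hmeas.sub aemeasurable_const).abs).const_mul _).ennreal_ofReal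
    _ ≤ ENNReal.ofReal (D * V) + ∑' k : ℕ, ENNReal.ofReal (4 * D * V * (1 / 2) ^ k) := by
        refine add_le_add ?_ (ENNReal.tsum_le_tsum fun k => ?_)
        · refine le_trans (lintegral_mono_set (closedBall_subset_ball (by linarith :
            ρ < 2 * ρ))) ?_
          rw [lint_osc H.loc _ _ _ _ (by positivity)]
          apply ENNReal.ofReal_le_ofReal
          have h3 := H.osc x0 (2 * ρ) (by linarith) hΩ
          have h4 : 2 / m * ∫ x in ball x0 (2 * ρ), |μ x - m| ≤ 2 * δ * ((2 * ρ) ^ n * vb n) := by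
            rw [div_mul_eq_mul_div, div_le_iff₀ hmp]
            linarith
          refine h4.trans ?_
          have : 2 * δ * ((2 * ρ) ^ n * vb n) = 1 * (2 ^ (n + 1) * δ * V) := by
            rw [hV, mul_pow, pow_succ]; ring
          rw [this, hD]
          have h5 : 0 ≤ 2 ^ (n + 1) * δ * V := by positivity
          nlinarith
        · rw [lintegral_indicator_const₀ (hFm k), Measure.restrict_apply₀ (hFm k)]
          have := decay hN H (by linarith) (k + 1) x0 ρ hρ hΩ
          refine le_trans (mul_le_mul_right this _) ?_
          rw [← ENNReal.ofReal_mul (by positivity)]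
          apply ENNReal.ofReal_le_ofReal
          have e : (2 : ℝ) ^ (k + 2) * (D ^ (k + 1) * V) = 4 * D * V * (2 * D) ^ k := by
            rw [mul_pow 2 D k]; ring
          rw [e]
          gcongr
          linarith
    _ = ENNReal.ofReal (D * V) + ENNReal.ofReal (8 * D * V) := by
        rw [← ENNReal.ofReal_tsum_of_nonneg (fun k => by positivity)
          (summable_geometric_two.mul_left _), tsum_mul_left, tsum_geometric_two]
        congr 2; ring
    _ = ENNReal.ofReal (9 * (N * 2 ^ (n + 1)) * δ * V) := by
        rw [← ENNReal.ofReal_add (by positivity) (by positivity)]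
        congr 1; rw [hD]; ring

lemma interior2 {n N : ℕ} (hN : CovProp n N) {Ω : Set (En n)} {μ : En n → ℝ} {δ : ℝ}
    (H : OscHyp n Ω μ δ) (hδ : N * 2 ^ (n + 1) * δ ≤ 1 / 4) (hδ' : 2 ^ n * δ ≤ 1 / 4)
    (x0 : En n) {ρ : ℝ} (hρ : 0 < ρ) (hΩ : ball x0 (2 * ρ) ⊆ Ω) :
    ∫⁻ z in closedBall x0 ρ, ENNReal.ofReal (ballAvg n μ x0 (2 * ρ) * (μ z)⁻¹) ≤
      ENNReal.ofReal (4 * (ρ ^ n * vb n)) := by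
  have hv := vb_pos n
  have hd := H.dpos
  have h1 := interior1 hN H hδ hδ' x0 hρ hΩ
  set m := ballAvg n μ x0 (2 * ρ) with hm
  have pw : ∀ z, ENNReal.ofReal (m * (μ z)⁻¹) ≤
      ENNReal.ofReal 1 + ENNReal.ofReal (max (m - μ z) 0 * (μ z)⁻¹) := by
    intro z
    rw [← ENNReal.ofReal_add (by norm_num)
      (mul_nonneg (le_max_right _ _) (inv_nonneg.2 (H.nonneg z)))]
    apply ENNReal.ofReal_le_ofReal
    rcases (H.nonneg z).eq_or_lt with hz | hz
    · simp [← hz]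
    · have a1 : (m - μ z) * (μ z)⁻¹ ≤ max (m - μ z) 0 * (μ z)⁻¹ :=
        mul_le_mul_of_nonneg_right (le_max_left _ _) (by positivity)
      have a2 : μ z * (μ z)⁻¹ = 1 := mul_inv_cancel₀ hz.ne'
      linarith
  refine (lintegral_mono pw).trans ?_
  rw [lintegral_add_left' aemeasurable_const, lintegral_const, Measure.restrict_apply_univ,
    vol_closedBall n x0 hρ.le, ENNReal.ofReal_one, one_mul]
  refine (add_le_add le_rfl h1).trans ?_
  rw [← ENNReal.ofReal_add (by positivity) (by positivity)]
  apply ENNReal.ofReal_le_ofReal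
  have : 0 < ρ ^ n * vb n := by positivity
  nlinarith

lemma layer_vol (n : ℕ) (hn : 0 < n) (y : En n) {r : ℝ} (hr : 0 < r) (k : ℕ) :
    volume (ball y r \ ball y (r * (1 - 2 / 2 ^ k))) ≤
      ENNReal.ofReal (2 * n / 2 ^ k * (r ^ n * vb n)) := by
  have hv := vb_pos n
  have hV : 0 < r ^ n * vb n := by positivity
  rcases Nat.eq_zero_or_pos k with rfl | hk
  · refine (measure_mono sdiff_subset).trans ?_
    rw [vol_ball n hn y hr.le]
    apply ENNReal.ofReal_le_ofReal
    have : (1 : ℝ) ≤ n := by exact_mod_cast hn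
    simp only [pow_zero, div_one]
    nlinarith
  · have h2 : (2 : ℝ) ≤ 2 ^ k := by
      calc (2 : ℝ) = 2 ^ 1 := by norm_num
        _ ≤ 2 ^ k := pow_le_pow_right₀ (by norm_num) hk
    have h3 : (2 : ℝ) / 2 ^ k ≤ 1 := by rw [div_le_one (by positivity)]; exact h2
    have h4 : (0 : ℝ) < 2 / 2 ^ k := by positivity
    have hs : 0 ≤ r * (1 - 2 / 2 ^ k) := mul_nonneg hr.le (by linarith)
    rw [measure_sdiff (ball_subset_ball (by nlinarith)) measurableSet_ball.nullMeasurableSet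
      measure_ball_lt_top.ne, vol_ball n hn y hr.le, vol_ball n hn y hs,
      ← ENNReal.ofReal_sub _ (by positivity)]
    apply ENNReal.ofReal_le_ofReal
    have hb := one_add_mul_le_pow (a := -(2 / 2 ^ k : ℝ)) (by linarith) n
    rw [mul_pow]
    have e : (2 : ℝ) * n / 2 ^ k = n * (2 / 2 ^ k) := by ring
    rw [e]
    have : (1 + -(2 / 2 ^ k : ℝ)) = 1 - 2 / 2 ^ k := by ring
    rw [this] at hb
    nlinarith

/-- the layer coefficients -/
def Ak (n N k : ℕ) : ℝ := 9 * (N * 2 ^ (n + 1)) + 4 * ((k + 1) * 2 ^ n * (4 / 3) ^ (k + 1))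

lemma Ak_nonneg (n N k : ℕ) : 0 ≤ Ak n N k := by unfold Ak; positivity

lemma Ak_summable (n N : ℕ) : Summable fun k : ℕ => N * Ak n N k * (2 * n / 2 ^ k) := by
  have h1 : Summable fun k : ℕ => ((1 : ℝ) / 2) ^ k :=
    summable_geometric_two
  have h2 : Summable fun k : ℕ => (k : ℝ) ^ 1 * ((2 : ℝ) / 3) ^ k :=
    summable_pow_mul_geometric_of_norm_lt_one 1 (by norm_num)
  have h3 : Summable fun k : ℕ => ((2 : ℝ) / 3) ^ k :=
    summable_geometric_of_lt_one (by norm_num) (by norm_num)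
  have h4 := ((h1.mul_left (9 * (N * 2 ^ (n + 1)) * N * 2 * n : ℝ)).add
    ((h2.add h3).mul_left (4 * 2 ^ n * (4 / 3) * N * 2 * n : ℝ)))
  refine h4.congr fun k => ?_
  unfold Ak
  have e : ((2 : ℝ) / 3) ^ k = (4 / 3) ^ k * (1 / 2) ^ k := by rw [← mul_pow]; norm_num
  have e2 : (2 * n / 2 ^ k : ℝ) = 2 * n * (1 / 2) ^ k := by
    rw [one_div, inv_pow]; rfl
  rw [e, e2, pow_succ (4 / 3 : ℝ)]
  ring

lemma whitney {n N : ℕ} (hN : CovProp n N) {Ω : Set (En n)} {μ : En n → ℝ} {δ : ℝ}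
    (H : OscHyp n Ω μ δ) (hδ : N * 2 ^ (n + 1) * δ ≤ 1 / 4) (hδ' : 2 ^ n * δ ≤ 1 / 4)
    (x y : En n) {r d : ℝ} (hr : 0 < r) (hΩ : ball y r ⊆ Ω) (hd : d = r - dist x y) (hd0 : 0 < d)
    (k : ℕ) (hk : r ≤ 2 ^ (k + 1) * d) :
    ∫⁻ z in closedBall x (d / 2), ENNReal.ofReal (max (ballAvg n μ y r - μ z) 0 * (μ z)⁻¹) ≤
      ENNReal.ofReal (Ak n N k * δ) * volume (closedBall x (d / 2)) := by
  have hv := vb_pos n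
  have hd1 := H.dpos
  have hsub : ball x (2 * (d / 2)) ⊆ Ω := (ball_subset_ball' (by linarith)).trans hΩ
  have i1 := interior1 hN H hδ hδ' x (half_pos hd0) hsub
  have i2 := interior2 hN H hδ hδ' x (half_pos hd0) hsub
  have hc := chain H (by linarith) (k + 1) x y r d hd0 hr hk (by linarith) hΩ
  have e2 : 2 * (d / 2) = d := by ring
  rw [e2] at i1 i2
  set m := ballAvg n μ y r
  set w := ballAvg n μ x d
  have hm0 : 0 ≤ m := ballAvg_nonneg n μ H.nonneg y r
  have hw0 : 0 ≤ w := ballAvg_nonneg n μ H.nonneg x d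
  set t := 2 ^ n * δ with ht
  have ht0 : 0 ≤ t := by positivity
  have hb := one_add_mul_le_pow (a := -t) (by linarith) (k + 1)
  push_cast at hb
  have hb' : 1 - (k + 1) * t ≤ (1 - t) ^ (k + 1) := by
    have : 1 + -t = 1 - t := by ring
    rw [this] at hb; linarith
  have h34 : (3 / 4 : ℝ) ^ (k + 1) ≤ (1 - t) ^ (k + 1) :=
    pow_le_pow_left₀ (by norm_num) (by linarith) _
  have hmw : m ≤ (4 / 3) ^ (k + 1) * w := by
    have a1 : (3 / 4 : ℝ) ^ (k + 1) * m ≤ w := (mul_le_mul_of_nonneg_right h34 hm0).trans hc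
    have a2 : (4 / 3 : ℝ) ^ (k + 1) * (3 / 4) ^ (k + 1) = 1 := by rw [← mul_pow]; norm_num
    calc m = (4 / 3 : ℝ) ^ (k + 1) * ((3 / 4) ^ (k + 1) * m) := by rw [← mul_assoc, a2, one_mul]
      _ ≤ _ := mul_le_mul_of_nonneg_left a1 (by positivity)
  set c : ℝ := (k + 1) * t * (4 / 3) ^ (k + 1) with hcdef
  have hc0 : 0 ≤ c := by positivity
  have hdiff : m - w ≤ c * w := by
    have a1 : (1 - (k + 1) * t) * m ≤ w := (mul_le_mul_of_nonneg_right hb' hm0).trans hc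
    have a2 : ((k + 1) * t) * m ≤ ((k + 1) * t) * ((4 / 3) ^ (k + 1) * w) :=
      mul_le_mul_of_nonneg_left hmw (by positivity)
    rw [hcdef]; linarith
  have pw : ∀ z, ENNReal.ofReal (max (m - μ z) 0 * (μ z)⁻¹) ≤
      ENNReal.ofReal (max (w - μ z) 0 * (μ z)⁻¹) +
        ENNReal.ofReal c * ENNReal.ofReal (w * (μ z)⁻¹) := by
    intro z
    have hi : 0 ≤ (μ z)⁻¹ := inv_nonneg.2 (H.nonneg z)
    rw [← ENNReal.ofReal_mul hc0, ← ENNReal.ofReal_add (mul_nonneg (le_max_right _ _) hi)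
      (by positivity), ← mul_assoc, ← add_mul]
    apply ENNReal.ofReal_le_ofReal
    refine mul_le_mul_of_nonneg_right (max_le ?_ ?_) hi
    · linarith [le_max_left (w - μ z) 0]
    · have := le_max_right (w - μ z) 0
      positivity
  have hmeas : AEMeasurable μ (volume.restrict (closedBall x (d / 2))) :=
    H.loc.aestronglyMeasurable.aemeasurable.restrict
  refine (lintegral_mono pw).trans ?_
  rw [lintegral_add_left', lintegral_const_mul' _ _ ENNReal.ofReal_ne_top]
  · refine (add_le_add i1 (mul_le_mul_right i2 _)).trans ?_
    rw [vol_closedBall n x (by positivity), ← ENNReal.ofReal_mul hc0,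
      ← ENNReal.ofReal_mul (mul_nonneg (Ak_nonneg _ _ _) hd1),
      ← ENNReal.ofReal_add (by positivity) (by positivity)]
    apply ENNReal.ofReal_le_ofReal
    rw [hcdef, ht]; unfold Ak
    apply le_of_eq
    ring
  · exact (((aemeasurable_const.sub hmeas).max aemeasurable_const).mul hmeas.inv).ennreal_ofReal

lemma global {n N : ℕ} (hN : CovProp n N) {Ω : Set (En n)} {μ : En n → ℝ} {δ : ℝ}
    (H : OscHyp n Ω μ δ) (hδ : N * 2 ^ (n + 1) * δ ≤ 1 / 4) (hδ' : 2 ^ n * δ ≤ 1 / 4)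
    (y : En n) {r : ℝ} (hr : 0 < r) (hΩ : ball y r ⊆ Ω) :
    ∫⁻ z in ball y r, ENNReal.ofReal (max (ballAvg n μ y r - μ z) 0 * (μ z)⁻¹) ≤
      ENNReal.ofReal ((∑' k : ℕ, N * Ak n N k * (2 * n / 2 ^ k)) * (δ * (r ^ n * vb n))) := by
  have hv := vb_pos n
  have hd := H.dpos
  set m := ballAvg n μ y r
  set g : En n → ℝ≥0∞ := fun z => ENNReal.ofReal (max (m - μ z) 0 * (μ z)⁻¹) with hg
  let L : ℕ → Set (En n) := fun k => {x | r / 2 ^ (k + 1) < r - dist x y ∧ r - dist x y ≤ r / 2 ^ k}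
  have hcover : ball y r ⊆ ⋃ k, L k := by
    classical
    intro x hx
    have hx' : 0 < r - dist x y := by have := mem_ball.1 hx; linarith
    have hex : ∃ j : ℕ, r / 2 ^ (j + 1) < r - dist x y := by
      obtain ⟨j, hj⟩ := pow_unbounded_of_one_lt (r / (r - dist x y)) (one_lt_two (α := ℝ))
      refine ⟨j, ?_⟩
      rw [div_lt_iff₀ hx'] at hj
      rw [div_lt_iff₀ (by positivity), pow_succ]
      have : 0 < (r - dist x y) * 2 ^ j := by positivity
      nlinarith
    obtain ⟨j, hj, hjm⟩ : ∃ j : ℕ, r / 2 ^ (j + 1) < r - dist x y ∧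
        ∀ i < j, ¬ r / 2 ^ (i + 1) < r - dist x y :=
      ⟨Nat.find hex, Nat.find_spec hex, fun i hi => Nat.find_min hex hi⟩
    refine mem_iUnion.2 ⟨j, hj, ?_⟩
    cases j with
    | zero => simp
    | succ k => exact not_lt.1 (hjm k (by omega))
  have hlayer : ∀ k, ∫⁻ z in L k, g z ≤
      ENNReal.ofReal (N * Ak n N k * (2 * n / 2 ^ k) * (δ * (r ^ n * vb n))) := by
    intro k
    refine (withDensity_apply_le g (L k)).trans ?_
    have hA := Ak_nonneg n N k
    have hcov := hN.2 (volume.withDensity g) (ENNReal.ofReal (Ak n N k * δ) • volume) (L k)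
      (ball y r \ ball y (r * (1 - 2 / 2 ^ k))) (fun x => (r - dist x y) / 2) r ?_
    · refine hcov.trans ?_
      rw [Measure.smul_apply, smul_eq_mul]
      refine (mul_le_mul_right (mul_le_mul_right (layer_vol n H.hn y hr k) _) _).trans ?_
      rw [← ENNReal.ofReal_mul (by positivity), ← ENNReal.ofReal_natCast,
        ← ENNReal.ofReal_mul (by positivity)]
      apply ENNReal.ofReal_le_ofReal
      apply le_of_eq; ring
    · rintro x ⟨hx1, hx2⟩
      have hp : 0 < r / 2 ^ (k + 1) := by positivity
      have hdist := dist_nonneg (x := x) (y := y)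
      refine ⟨by linarith, by linarith, ?_, ?_⟩
      · intro z hz
        have hz := mem_closedBall.1 hz
        have t1 := dist_triangle z x y
        have t2 := dist_triangle_left x y z
        rw [dist_comm z x] at hz t1
        rw [dist_comm z x] at t2
        refine ⟨mem_ball.2 (by linarith), fun hb => ?_⟩
        have hb := mem_ball.1 hb
        have e : r * (1 - 2 / 2 ^ k) = r - 2 * (r / 2 ^ k) := by ring
        rw [e] at hb
        linarith
      · rw [withDensity_apply _ measurableSet_closedBall, Measure.smul_apply, smul_eq_mul]
        refine whitney hN H hδ hδ' x y hr hΩ rfl (by linarith) k ?_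
        rw [div_lt_iff₀ (by positivity)] at hx1
        linarith
  calc ∫⁻ z in ball y r, g z ≤ ∫⁻ z in ⋃ k, L k, g z := lintegral_mono_set hcover
    _ ≤ ∑' k, ∫⁻ z in L k, g z := lintegral_iUnion_le _ _
    _ ≤ ∑' k : ℕ, ENNReal.ofReal (N * Ak n N k * (2 * n / 2 ^ k) * (δ * (r ^ n * vb n))) :=
        ENNReal.tsum_le_tsum hlayer
    _ = _ := by
        rw [← ENNReal.ofReal_tsum_of_nonneg _ ((Ak_summable n N).mul_right _), tsum_mul_right]
        intro k
        have hA := Ak_nonneg n N k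
        positivity

lemma two_osc {n : ℕ} (hn : 0 < n) {f : En n → ℝ} (y : En n) {r : ℝ} (hr : 0 < r)
    (hf : IntegrableOn f (ball y r)) (c : ℝ) :
    ∫ x in ball y r, |f x - ballAvg n f y r| ≤ 2 * ∫ x in ball y r, |f x - c| := by
  have hv := vb_pos n
  have hp : 0 < r ^ n * vb n := by positivity
  have hic : ∀ c : ℝ, IntegrableOn (fun _ : En n => c) (ball y r) := fun c =>
    integrableOn_const measure_ball_lt_top.ne
  have hi : ∀ c : ℝ, IntegrableOn (fun x => f x - c) (ball y r) := fun c => hf.sub (hic c)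
  have hia : ∀ c : ℝ, IntegrableOn (fun x => |f x - c|) (ball y r) := fun c => (hi c).abs
  set b := ballAvg n f y r with hb
  have h1 : ∫ x in ball y r, (f x - c) = (b - c) * (r ^ n * vb n) := by
    rw [integral_sub hf (hic c), int_ball n hn f y hr, setIntegral_const, volr_ball n hn y hr.le,
      smul_eq_mul]
    ring
  have h2 : |b - c| * (r ^ n * vb n) ≤ ∫ x in ball y r, |f x - c| := by
    rw [← abs_of_pos hp, ← abs_mul, ← h1]
    exact abs_integral_le_integral_abs
  have h3 : ∫ x in ball y r, |f x - b| ≤ ∫ x in ball y r, (|f x - c| + |b - c|) := by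
    refine integral_mono (hia b) ((hia c).add (hic _)) fun x => ?_
    dsimp only
    have : f x - b = (f x - c) - (b - c) := by ring
    rw [this]
    exact abs_sub _ _
  rw [integral_add (hia c) (hic _), setIntegral_const, volr_ball n hn y hr.le, smul_eq_mul] at h3
  linarith

lemma small_case {n N : ℕ} (hN : CovProp n N) {Ω : Set (En n)} {μ : En n → ℝ} {δ : ℝ}
    (H : OscHyp n Ω μ δ) (hδ : N * 2 ^ (n + 1) * δ ≤ 1 / 4) (hδ' : 2 ^ n * δ ≤ 1 / 4)
    (y : En n) {r : ℝ} (hr : 0 < r) (hΩ : ball y r ⊆ Ω)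
    (hβ : IntegrableOn (fun x => (μ x)⁻¹) (ball y r)) :
    (∫ x in ball y r, |(μ x)⁻¹ - ballAvg n (fun x => (μ x)⁻¹) y r|) /
      (∫ x in ball y r, (μ x)⁻¹) ≤
      4 * ((∑' k : ℕ, N * Ak n N k * (2 * n / 2 ^ k)) + 1) * δ := by
  have hv := vb_pos n
  have hd := H.dpos
  set C := (∑' k : ℕ, N * Ak n N k * (2 * n / 2 ^ k)) with hC
  have hC0 : 0 ≤ C := tsum_nonneg fun k => by
    have hA := Ak_nonneg n N k
    positivity
  have hG := global hN H hδ hδ' y hr hΩ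
  set V := r ^ n * vb n with hV
  have hV0 : 0 < V := by positivity
  set m := ballAvg n μ y r with hm
  have hm0 : 0 ≤ m := ballAvg_nonneg n μ H.nonneg y r
  have hδ1 : δ ≤ 1 / 2 := by
    have : (1 : ℝ) ≤ 2 ^ n := one_le_pow₀ (by norm_num)
    nlinarith
  rcases hm0.eq_or_lt with h0 | hmp
  · have hzero_int : ∫ x in ball y r, μ x = 0 := by rw [int_ball n H.hn μ y hr, ← hm, ← h0, zero_mul]
    have hz : μ =ᵐ[volume.restrict (ball y r)] 0 :=
      (integral_eq_zero_iff_of_nonneg H.nonneg (intOn_ball H.loc y r)).1 hzero_int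
    have hz2 : ∫ x in ball y r, (μ x)⁻¹ = 0 := by
      rw [integral_congr_ae (g := fun _ => (0 : ℝ))]
      · simp
      · filter_upwards [hz] with x hx
        simp [hx]
    rw [hz2, div_zero]
    positivity
  set g : En n → ℝ := fun z => max (m - μ z) 0 * (μ z)⁻¹ with hg
  have hg0 : ∀ z, 0 ≤ g z := fun z => mul_nonneg (le_max_right _ _) (inv_nonneg.2 (H.nonneg z))
  have hmeas : AEMeasurable μ (volume.restrict (ball y r)) :=
    H.loc.aestronglyMeasurable.aemeasurable.restrict
  have hgm : AEStronglyMeasurable g (volume.restrict (ball y r)) :=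
    (((aemeasurable_const.sub hmeas).max aemeasurable_const).mul hmeas.inv).aestronglyMeasurable
  have hgi : IntegrableOn g (ball y r) :=
    (lintegral_ofReal_ne_top_iff_integrable hgm (ae_of_all _ hg0)).1
      (ne_top_of_le_ne_top ENNReal.ofReal_ne_top hG)
  have hgint : ∫ z in ball y r, g z ≤ C * (δ * V) := by
    rw [integral_eq_lintegral_of_nonneg_ae (ae_of_all _ hg0) hgm]
    exact ENNReal.toReal_le_of_le_ofReal (by positivity) hG
  have hosc := H.osc y r hr hΩ
  rw [← hm, ← hV] at hosc
  have hoi := intOn_abs H.loc y r m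
  have hic : ∀ c : ℝ, IntegrableOn (fun _ : En n => c) (ball y r) := fun c =>
    integrableOn_const measure_ball_lt_top.ne
  -- upper bound
  have hup : ∫ x in ball y r, |(μ x)⁻¹ - m⁻¹| ≤ (C + 1) * δ * (V / m) := by
    have h1 : ∫ x in ball y r, |(μ x)⁻¹ - m⁻¹| ≤
        ∫ x in ball y r, (m⁻¹ * g x + m⁻¹ * m⁻¹ * |μ x - m|) := by
      refine integral_mono (hβ.sub (hic _)).abs ((hgi.const_mul _).add (hoi.const_mul _))
        fun x => ?_
      show |(μ x)⁻¹ - m⁻¹| ≤ m⁻¹ * (max (m - μ x) 0 * (μ x)⁻¹) + m⁻¹ * m⁻¹ * |μ x - m|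
      rcases (H.nonneg x).eq_or_lt with hx | hx
      · rw [← hx]
        simp only [inv_zero, zero_sub, mul_zero, zero_add, abs_neg, abs_of_pos hmp,
          abs_of_pos (inv_pos.2 hmp), mul_assoc, inv_mul_cancel₀ hmp.ne', mul_one]
        exact le_rfl
      · have e : (μ x)⁻¹ - m⁻¹ = m⁻¹ * ((m - μ x) * (μ x)⁻¹) := by field_simp
        rw [e, abs_mul, abs_of_pos (inv_pos.2 hmp), mul_assoc m⁻¹ m⁻¹, ← mul_add]
        refine mul_le_mul_of_nonneg_left ?_ (by positivity)
        rw [abs_mul, abs_of_pos (inv_pos.2 hx)]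
        rcases le_total (μ x) m with hxm | hxm
        · rw [abs_of_nonneg (by linarith), max_eq_left (by linarith)]
          have : 0 ≤ m⁻¹ * |μ x - m| := by positivity
          linarith
        · rw [max_eq_right (by linarith), zero_mul, zero_add, abs_sub_comm, mul_comm]
          refine mul_le_mul_of_nonneg_right ?_ (abs_nonneg _)
          exact inv_anti₀ hmp hxm
    rw [integral_add (hgi.const_mul _) (hoi.const_mul _), integral_const_mul,
      integral_const_mul] at h1
    refine h1.trans ?_
    have a1 : m⁻¹ * ∫ z in ball y r, g z ≤ m⁻¹ * (C * (δ * V)) :=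
      mul_le_mul_of_nonneg_left hgint (by positivity)
    have a2 : m⁻¹ * m⁻¹ * ∫ z in ball y r, |μ z - m| ≤ m⁻¹ * m⁻¹ * (δ * (m * V)) :=
      mul_le_mul_of_nonneg_left hosc (by positivity)
    have a3 : m⁻¹ * (C * (δ * V)) + m⁻¹ * m⁻¹ * (δ * (m * V)) = (C + 1) * δ * (V / m) := by
      field_simp
    linarith
  -- lower bound
  have hlow : V / m / 2 ≤ ∫ x in ball y r, (μ x)⁻¹ := by
    have h1 : ∫ x in ball y r, (m⁻¹ - m⁻¹ * m⁻¹ * |μ x - m|) ≤ ∫ x in ball y r, (μ x)⁻¹ := by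
      refine integral_mono ((hic _).sub (hoi.const_mul _)) hβ fun x => ?_
      dsimp only
      rcases (H.nonneg x).eq_or_lt with hx | hx
      · rw [← hx]
        simp only [inv_zero, zero_sub, abs_neg, abs_of_pos hmp, mul_assoc,
          inv_mul_cancel₀ hmp.ne', mul_one, sub_self]
        exact le_rfl
      · have b1 : m⁻¹ * m⁻¹ * (μ x - m) ≤ m⁻¹ * m⁻¹ * |μ x - m| :=
          mul_le_mul_of_nonneg_left (le_abs_self _) (by positivity)
        have b2 : (μ x)⁻¹ - (m⁻¹ - m⁻¹ * m⁻¹ * (μ x - m)) =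
            (μ x)⁻¹ * (m⁻¹ * (μ x - m)) ^ 2 := by
          field_simp; ring
        have b3 : 0 ≤ (μ x)⁻¹ * (m⁻¹ * (μ x - m)) ^ 2 := by positivity
        linarith
    rw [integral_sub (hic _) (hoi.const_mul _), integral_const_mul, setIntegral_const,
      volr_ball n H.hn y hr.le, ← hV, smul_eq_mul] at h1
    have a2 : m⁻¹ * m⁻¹ * ∫ z in ball y r, |μ z - m| ≤ m⁻¹ * m⁻¹ * (δ * (m * V)) :=
      mul_le_mul_of_nonneg_left hosc (by positivity)
    have a3 : m⁻¹ * m⁻¹ * (δ * (m * V)) = δ * (V / m) := by field_simp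
    have a4 : V * m⁻¹ = V / m := rfl
    have a5 : 0 < V / m := by positivity
    nlinarith
  have hpos : 0 < V / m := by positivity
  rw [div_le_iff₀ (by linarith)]
  have ht := two_osc H.hn y hr hβ m⁻¹
  have hk : 4 * (C + 1) * δ * (V / m / 2) ≤ 4 * (C + 1) * δ * ∫ x in ball y r, (μ x)⁻¹ :=
    mul_le_mul_of_nonneg_left hlow (by positivity)
  linarith

lemma big_case {n : ℕ} (hn : 0 < n) {f : En n → ℝ} (hf0 : ∀ x, 0 ≤ f x) (y : En n) {r : ℝ}
    (hr : 0 < r) (hf : IntegrableOn f (ball y r)) :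
    (∫ x in ball y r, |f x - ballAvg n f y r|) / (∫ x in ball y r, f x) ≤ 2 := by
  have h := two_osc hn y hr hf 0
  simp only [sub_zero, abs_of_nonneg (hf0 _)] at h
  exact div_le_of_le_mul₀ (integral_nonneg hf0) (by norm_num) h

lemma not_int_case {n : ℕ} {f : En n → ℝ} (y : En n) {r : ℝ}
    (hf : ¬ IntegrableOn f (ball y r)) :
    (∫ x in ball y r, |f x - ballAvg n f y r|) / (∫ x in ball y r, f x) = 0 := by
  rw [integral_undef hf, div_zero]

/-- Weighted mean oscillation of the reciprocal of an `A₂` weight (Lemma 2.9). -/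
theorem statement14
    (n : ℕ) (hn : 0 < n) (K₀ : ℝ) (hK₀ : 1 ≤ K₀) :
    ∃ N > (0 : ℝ),
      ∀ μ : En n → ℝ,
        (∀ x, 0 ≤ μ x) → LocallyIntegrable μ →
        apNorm n 2 μ ≤ ENNReal.ofReal K₀ →
        ∀ R₀ : ℝ, 0 < R₀ →
          wBMO n (ball (0 : En n) R₀) (fun x => (μ x)⁻¹) (fun x => (μ x)⁻¹) ≤
            ENNReal.ofReal N * wBMO n (ball (0 : En n) R₀) μ μ := by
  obtain ⟨N, hN1, hN⟩ := covering n
  have hNc : CovProp n N := ⟨hN1, hN⟩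
  set C := (∑' k : ℕ, N * Ak n N k * (2 * n / 2 ^ k)) with hC
  have hC0 : 0 ≤ C := tsum_nonneg fun k => by
    have hA := Ak_nonneg n N k
    positivity
  have hNr : (1 : ℝ) ≤ N := by exact_mod_cast hN1
  set ε : ℝ := 1 / (4 * (N * 2 ^ (n + 1))) with hε
  have hε0 : 0 < ε := by positivity
  refine ⟨2 / ε + 4 * (C + 1), by positivity, ?_⟩
  intro μ hμ0 hμ _ R₀ _
  set Ω := ball (0 : En n) R₀
  set W := wBMO n Ω μ μ with hW
  refine iSup_le fun y => iSup_le fun r => iSup_le fun hr => iSup_le fun hΩ => ?_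
  by_cases hβ : IntegrableOn (fun x => (μ x)⁻¹) (ball y r)
  swap
  · rw [not_int_case y hβ]; simp
  rcases le_or_gt (ENNReal.ofReal ε) W with hbig | hsmall
  · calc _ ≤ ENNReal.ofReal 2 := ENNReal.ofReal_le_ofReal
          (big_case hn (fun x => inv_nonneg.2 (hμ0 x)) y hr hβ)
      _ ≤ ENNReal.ofReal ((2 / ε + 4 * (C + 1)) * ε) := by
          apply ENNReal.ofReal_le_ofReal
          have : (2 / ε + 4 * (C + 1)) * ε = 2 + 4 * (C + 1) * ε := by field_simp
          rw [this]
          have : 0 ≤ 4 * (C + 1) * ε := by positivity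
          linarith
      _ = ENNReal.ofReal (2 / ε + 4 * (C + 1)) * ENNReal.ofReal ε :=
          ENNReal.ofReal_mul (by positivity)
      _ ≤ _ := by gcongr
  · have hWt : W ≠ ⊤ := ne_top_of_lt hsmall
    set δ := W.toReal with hδ
    have hWδ : W = ENNReal.ofReal δ := (ENNReal.ofReal_toReal hWt).symm
    have hδ0 : 0 ≤ δ := ENNReal.toReal_nonneg
    have hδε : δ ≤ ε := by
      rw [hWδ] at hsmall
      exact ((ENNReal.ofReal_lt_ofReal_iff hε0).1 hsmall).le
    have H : OscHyp n Ω μ δ := by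
      refine ⟨hn, hμ0, hμ, hδ0, fun y r hr hΩ => ?_⟩
      rw [← int_ball n hn μ y hr]
      have h1 : ENNReal.ofReal ((∫ x in ball y r, |μ x - ballAvg n μ y r|) /
          (∫ x in ball y r, μ x)) ≤ ENNReal.ofReal δ := by
        rw [← hWδ, hW, wBMO]
        exact le_iSup_of_le y (le_iSup_of_le r (le_iSup_of_le hr (le_iSup_of_le hΩ le_rfl)))
      rw [ENNReal.ofReal_le_ofReal_iff hδ0] at h1
      have h0 : 0 ≤ ∫ x in ball y r, μ x := integral_nonneg hμ0
      rcases h0.eq_or_lt with hz | hp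
      · have h2 := two_osc hn y hr (intOn_ball hμ y r) 0
        simp only [sub_zero, abs_of_nonneg (hμ0 _)] at h2
        rw [← hz] at h2 ⊢
        linarith
      · exact (div_le_iff₀ hp).1 h1
    have hk1 : N * 2 ^ (n + 1) * δ ≤ 1 / 4 := by
      have := mul_le_mul_of_nonneg_left hδε (by positivity : (0 : ℝ) ≤ N * 2 ^ (n + 1))
      refine this.trans (le_of_eq ?_)
      rw [hε]; field_simp
    have hk2 : 2 ^ n * δ ≤ 1 / 4 := by
      have h2 : 0 ≤ 2 ^ n * δ := by positivity
      have : N * 2 ^ (n + 1) * δ = 2 * N * (2 ^ n * δ) := by ring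
      nlinarith
    refine (ENNReal.ofReal_le_ofReal (small_case hNc H hk1 hk2 y hr hΩ hβ)).trans ?_
    rw [hWδ, ← ENNReal.ofReal_mul (by positivity)]
    apply ENNReal.ofReal_le_ofReal
    refine mul_le_mul_of_nonneg_right ?_ hδ0
    have : 0 < 2 / ε := by positivity
    linarith

end
end

section
/- Let n ∈ ℕ and define φ : ℝⁿ\{0} → ℝ by φ(x) = −ln|x| if |x| ≤ e^{−1} and φ(x) = 1 otherwise. There exists a constant N = N(n) > 0 such that for every r₀ ∈ (0, 1/(10e)), one has [[φ]]_{BMO(B_{r₀}, φ)} ≤ N / |ln(4r₀)|; that is, for every ball B_r(x₀) ⊂ B_{r₀}, (1/φ(B_r(x₀))) ∫_{B_r(x₀)} |φ(x) − (φ)_{B_r(x₀)}| dx ≤ N / |ln(4r₀)|. -/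
open MeasureTheory Metric Set
open scoped ENNReal Topology

noncomputable section

/-- The logarithmic weight `φ(x) = −ln|x|` for `|x| ≤ e⁻¹`, and `φ(x) = 1` otherwise. -/
def logWeight (n : ℕ) : En n → ℝ :=
  fun x => if ‖x‖ ≤ Real.exp (-1) then -Real.log ‖x‖ else 1

/-- The radial profile `-log ‖y‖` cut off to the unit ball. -/
def logProfile (n : ℕ) : En n → ℝ :=
  (ball (0 : En n) 1).indicator (fun y => -Real.log ‖y‖)

lemma logProfile_nonneg (n : ℕ) (y : En n) : 0 ≤ logProfile n y := by
  unfold logProfile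
  apply indicator_nonneg
  intro x hx
  rw [mem_ball_zero_iff] at hx
  have := Real.log_nonpos (norm_nonneg x) hx.le
  linarith

lemma logProfile_integrable (n : ℕ) (hn : 0 < n) : Integrable (logProfile n) := by
  have : Nonempty (Fin n) := ⟨⟨0, hn⟩⟩
  have : Nontrivial (En n) := inferInstance
  unfold logProfile
  rw [integrable_indicator_iff measurableSet_ball]
  rw [integrableOn_fun_norm_addHaar (μ := (volume : Measure (En n))) (f := fun t => -Real.log t)]
  have h1 : IntegrableOn (fun t : ℝ => Real.log t) (Ioc 0 1) := by
    have := (intervalIntegral.intervalIntegrable_log' (a := 0) (b := 1)).1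
    exact this
  have h2 : IntegrableOn (fun t : ℝ => -Real.log t) (Ioo 0 1) :=
    (h1.mono_set Ioo_subset_Ioc_self).neg
  refine Integrable.mono h2 ?_ ?_
  · apply Measurable.aestronglyMeasurable
    exact (measurable_id.pow_const _).smul Real.measurable_log.neg
  · filter_upwards [ae_restrict_mem measurableSet_Ioo] with t ht
    rw [norm_smul]
    have : ‖t ^ (Module.finrank ℝ (En n) - 1)‖ ≤ 1 := by
      rw [norm_pow, Real.norm_of_nonneg ht.1.le]
      exact pow_le_one₀ ht.1.le ht.2.le
    exact mul_le_of_le_one_left (norm_nonneg _) this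

/-- Shifted, rescaled profile: a.e. on `B_r(x₀)`, `φ = -log R + G`, `R = |x₀| + r`. -/
lemma logWeight_eq (n : ℕ) (x₀ : En n) (r : ℝ) (hr : 0 < r)
    (hsub : ∀ x ∈ ball x₀ r, ‖x‖ ≤ Real.exp (-1)) (x : En n) (hx : x ∈ ball x₀ r) (hx0 : x ≠ 0) :
    logWeight n x = -Real.log (‖x₀‖ + r) + logProfile n ((‖x₀‖ + r)⁻¹ • x) := by
  have hR : 0 < ‖x₀‖ + r := by positivity
  have hxn : 0 < ‖x‖ := norm_pos_iff.2 hx0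
  have hxR : ‖x‖ < ‖x₀‖ + r := by
    have h1 : ‖x - x₀‖ < r := by simpa [dist_eq_norm] using hx
    have h2 : ‖x‖ ≤ ‖x₀‖ + ‖x - x₀‖ := by
      simpa using norm_add_le x₀ (x - x₀)
    linarith
  have hn : ‖(‖x₀‖ + r)⁻¹ • x‖ = (‖x₀‖ + r)⁻¹ * ‖x‖ := by
    rw [norm_smul, Real.norm_of_nonneg (by positivity)]
  have hmem : (‖x₀‖ + r)⁻¹ • x ∈ ball (0 : En n) 1 := by
    rw [mem_ball_zero_iff, hn, inv_mul_lt_iff₀ hR]; simpa using hxR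
  unfold logProfile logWeight
  rw [indicator_of_mem hmem, if_pos (hsub x hx), hn, Real.log_mul (by positivity) hxn.ne',
    Real.log_inv]
  ring

/-- Uniform bound for the mean of the rescaled profile. -/
lemma profile_bound (n : ℕ) (hn : 0 < n) (x₀ : En n) (r : ℝ) (hr : 0 < r) :
    ∫ x in ball x₀ r, logProfile n ((‖x₀‖ + r)⁻¹ • x) ≤
      (Real.log 3 + 3 ^ n * (∫ y, logProfile n y) / volume.real (ball (0 : En n) 1)) *
        volume.real (ball x₀ r) := by
  have hR : 0 < ‖x₀‖ + r := by positivity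
  have hI := (logProfile_integrable n hn).comp_smul (inv_ne_zero hR.ne')
  have hK : 0 ≤ ∫ y, logProfile n y := integral_nonneg (logProfile_nonneg n)
  have hlog3 : 0 ≤ Real.log 3 := Real.log_nonneg (by norm_num)
  have hV1 : 0 < volume.real (ball (0 : En n) 1) :=
    ENNReal.toReal_pos (measure_ball_pos _ _ one_pos).ne' measure_ball_lt_top.ne
  have hV : volume.real (ball x₀ r) = r ^ n * volume.real (ball (0 : En n) 1) := by
    rw [measureReal_def, Measure.addHaar_ball_of_pos _ _ hr, ENNReal.toReal_mul,
      ENNReal.toReal_ofReal (by positivity), measureReal_def]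
    simp
  rcases le_or_gt (2 * r) ‖x₀‖ with h | h
  · have hb : ∀ x ∈ ball x₀ r, logProfile n ((‖x₀‖ + r)⁻¹ • x) ≤ Real.log 3 := by
      intro x hx
      have h1 : ‖x₀ - x‖ < r := by
        rw [← dist_eq_norm, dist_comm]; exact hx
      have h2 : ‖x₀‖ ≤ ‖x‖ + ‖x₀ - x‖ := by
        simpa using norm_add_le x (x₀ - x)
      have hxn : 0 < ‖x‖ := by linarith
      unfold logProfile
      by_cases hm : (‖x₀‖ + r)⁻¹ • x ∈ ball (0 : En n) 1
      · rw [indicator_of_mem hm, norm_smul, Real.norm_of_nonneg (by positivity), ← Real.log_inv]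
        apply Real.log_le_log (by positivity)
        rw [mul_inv, inv_inv, ← div_eq_mul_inv, div_le_iff₀ hxn]
        linarith
      · rw [indicator_of_notMem hm]; exact hlog3
    calc _ ≤ ∫ x in ball x₀ r, Real.log 3 :=
          setIntegral_mono_on hI.integrableOn (integrableOn_const measure_ball_lt_top.ne)
            measurableSet_ball hb
      _ = Real.log 3 * volume.real (ball x₀ r) := by
          rw [setIntegral_const, smul_eq_mul, mul_comm]
      _ ≤ _ := by
          apply mul_le_mul_of_nonneg_right _ measureReal_nonneg
          have : 0 ≤ 3 ^ n * (∫ y, logProfile n y) / volume.real (ball (0 : En n) 1) := by positivity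
          linarith
  · calc _ ≤ ∫ x, logProfile n ((‖x₀‖ + r)⁻¹ • x) :=
          setIntegral_le_integral hI (Filter.Eventually.of_forall fun x => logProfile_nonneg n _)
      _ = (‖x₀‖ + r) ^ n * ∫ y, logProfile n y := by
          rw [Measure.integral_comp_inv_smul_of_nonneg _ _ hR.le]; simp
      _ ≤ (3 * r) ^ n * ∫ y, logProfile n y := by
          gcongr; linarith
      _ = (3 ^ n * (∫ y, logProfile n y) / volume.real (ball (0 : En n) 1)) *
            volume.real (ball x₀ r) := by
          rw [hV, mul_pow]; field_simp
      _ ≤ _ := by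
          apply mul_le_mul_of_nonneg_right _ measureReal_nonneg
          linarith

/-- Smallness of the weighted mean oscillation of the logarithmic weight
(Remark 1.2 (b), estimate (1.7)). -/
theorem statement18 (n : ℕ) (hn : 0 < n) :
    ∃ N > (0 : ℝ),
      ∀ r₀ : ℝ, 0 < r₀ → r₀ < 1 / (10 * Real.exp 1) →
        wBMO n (ball (0 : En n) r₀) (logWeight n) (logWeight n) ≤
            ENNReal.ofReal (N / |Real.log (4 * r₀)|) ∧
        ∀ (x₀ : En n) (r : ℝ), 0 < r → ball x₀ r ⊆ ball (0 : En n) r₀ →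
          (∫ x in ball x₀ r, |logWeight n x - ballAvg n (logWeight n) x₀ r|) /
              (∫ x in ball x₀ r, logWeight n x) ≤ N / |Real.log (4 * r₀)| := by
  have : Nonempty (Fin n) := ⟨⟨0, hn⟩⟩
  set M : ℝ := Real.log 3 + 3 ^ n * (∫ y, logProfile n y) / volume.real (ball (0 : En n) 1)
    with hM
  have hMpos : 0 < M := by
    have h1 : 0 < Real.log 3 := Real.log_pos (by norm_num)
    have h2 : 0 ≤ ∫ y, logProfile n y := integral_nonneg (logProfile_nonneg n)
    have h3 : 0 ≤ volume.real (ball (0 : En n) 1) := measureReal_nonneg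
    positivity
  refine ⟨2 * M, by positivity, fun r₀ hr₀ hr₀' => ?_⟩
  have he : 2 ≤ Real.exp 1 := by
    have := Real.add_one_le_exp (1 : ℝ); linarith
  have h4 : 4 * r₀ < 1 := by
    have : 1 / (10 * Real.exp 1) ≤ 1 / (10 * 2) := by gcongr
    linarith
  have hexp : r₀ ≤ Real.exp (-1) := by
    rw [Real.exp_neg]
    have : 1 / (10 * Real.exp 1) ≤ (Real.exp 1)⁻¹ := by
      rw [one_div]; gcongr; linarith
    linarith
  have hlog : Real.log (4 * r₀) < 0 := Real.log_neg (by positivity) h4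
  have hL : 0 < |Real.log (4 * r₀)| := abs_pos.2 hlog.ne
  have key : ∀ (x₀ : En n) (r : ℝ), 0 < r → ball x₀ r ⊆ ball (0 : En n) r₀ →
      (∫ x in ball x₀ r, |logWeight n x - ballAvg n (logWeight n) x₀ r|) /
          (∫ x in ball x₀ r, logWeight n x) ≤ 2 * M / |Real.log (4 * r₀)| := by
    intro x₀ r hr hsub
    have hR : 0 < ‖x₀‖ + r := by positivity
    have hlt : ∀ x ∈ ball x₀ r, ‖x‖ < r₀ := fun x hx => by simpa using hsub hx
    have hle : ∀ x ∈ ball x₀ r, ‖x‖ ≤ Real.exp (-1) := fun x hx => (hlt x hx).le.trans hexp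
    have hne : ∀ᵐ x : En n ∂(volume.restrict (ball x₀ r)), x ≠ 0 :=
      ae_restrict_of_ae (Measure.ae_ne volume 0)
    have hmem : ∀ᵐ x : En n ∂(volume.restrict (ball x₀ r)), x ∈ ball x₀ r :=
      ae_restrict_mem measurableSet_ball
    have hVpos : 0 < volume.real (ball x₀ r) :=
      ENNReal.toReal_pos (measure_ball_pos _ _ hr).ne' measure_ball_lt_top.ne
    set G : En n → ℝ := fun x => logProfile n ((‖x₀‖ + r)⁻¹ • x) with hG
    have hGI : IntegrableOn G (ball x₀ r) :=
      ((logProfile_integrable n hn).comp_smul (inv_ne_zero hR.ne')).integrableOn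
    have hG0 : ∀ x, 0 ≤ G x := fun x => logProfile_nonneg n _
    have hC : ∀ c : ℝ, IntegrableOn (fun _ : En n => c) (ball x₀ r) := fun c =>
      integrableOn_const measure_ball_lt_top.ne
    have heq : logWeight n =ᵐ[volume.restrict (ball x₀ r)]
        fun x => -Real.log (‖x₀‖ + r) + G x := by
      filter_upwards [hne, hmem] with x h0 hx
      exact logWeight_eq n x₀ r hr hle x hx h0
    have hWI : IntegrableOn (logWeight n) (ball x₀ r) :=
      Integrable.congr ((hC _).add hGI) heq.symm
    set V := volume.real (ball x₀ r) with hV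
    set A := ballAvg n G x₀ r with hA
    have hAV : A * V = ∫ x in ball x₀ r, G x := by
      rw [hA, ballAvg, setAverage_eq, smul_eq_mul, ← hV]
      field_simp
    have hA0 : 0 ≤ A := by
      have : 0 ≤ ∫ x in ball x₀ r, G x := integral_nonneg hG0
      rw [← hAV] at this
      exact nonneg_of_mul_nonneg_left this hVpos
    have havg : ballAvg n (logWeight n) x₀ r = -Real.log (‖x₀‖ + r) + A := by
      have : ∫ x in ball x₀ r, logWeight n x = (-Real.log (‖x₀‖ + r) + A) * V := by
        rw [integral_congr_ae heq, integral_add (hC _) hGI, ← hAV, setIntegral_const, smul_eq_mul]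
        ring
      rw [ballAvg, setAverage_eq, smul_eq_mul, ← hV, this]
      field_simp
    have hnum : (∫ x in ball x₀ r, |logWeight n x - ballAvg n (logWeight n) x₀ r|) ≤
        2 * M * V := by
      calc _ ≤ ∫ x in ball x₀ r, (G x + A) := by
            apply integral_mono_ae ((hWI.sub (hC _)).abs) (hGI.add (hC _))
            filter_upwards [heq] with x hx
            simp only [Pi.sub_apply, Pi.add_apply]
            rw [hx, havg, abs_le]
            have := hG0 x
            constructor <;> linarith
        _ = 2 * ∫ x in ball x₀ r, G x := by
            rw [integral_add hGI (hC _), setIntegral_const, smul_eq_mul, ← hV, ← hAV]; ring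
        _ ≤ 2 * (M * V) := by
            gcongr
            exact profile_bound n hn x₀ r hr
        _ = _ := by ring
    have hden : |Real.log (4 * r₀)| * V ≤ ∫ x in ball x₀ r, logWeight n x := by
      calc |Real.log (4 * r₀)| * V = ∫ x in ball x₀ r, |Real.log (4 * r₀)| := by
            rw [setIntegral_const, smul_eq_mul, mul_comm]
        _ ≤ _ := by
            apply integral_mono_ae (hC _) hWI
            filter_upwards [hne, hmem] with x h0 hx
            have hp : 0 < ‖x‖ := norm_pos_iff.2 h0
            unfold logWeight
            rw [if_pos (hle x hx), abs_of_neg hlog]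
            have := Real.log_le_log hp (show ‖x‖ ≤ 4 * r₀ by linarith [hlt x hx])
            linarith
    calc _ ≤ 2 * M * V / (|Real.log (4 * r₀)| * V) := by
          apply div_le_div₀ (by positivity) hnum (by positivity) hden
      _ = _ := by field_simp
  refine ⟨?_, key⟩
  unfold wBMO
  refine iSup_le fun y => iSup_le fun r => iSup_le fun hr => iSup_le fun hs => ?_
  exact ENNReal.ofReal_le_ofReal (key y r hr hs)

end
end
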